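/- (Fujishige's optimality criterion) Let f : 2^E → ℕ be an integral polymatroid rank function, let C_e : ℕ×ℕ → ℝ≥0 (e ∈ E) be discrete convex in the first argument, let t ∈ ℕ^E and d ∈ ℕ. Then x* ∈ B_f(d) minimizes Σ_{e∈E} C_e(x_e;t_e) over B_f(d) if and only if for every e ∈ E with x*_e ≥ 1 and every g ∈ E∖{e} with x* + χ_g − χ_e ∈ B_f(d) one has C_e⁻(x*_e;t_e) ≤ C_g⁺(x*_g;t_g). -/

import Mathlib

open Finset

/-- Indicator vector of an element. -/
def chi {E : Type*} [DecidableEq E] (e : E) : E → ℕ := fun e' => if e' = e then 1 else 0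

/-- Integral polymatroid rank function: normalized, monotone, submodular. -/
def IsPolymatroidRank {E : Type*} [Fintype E] [DecidableEq E] (f : Finset E → ℕ) : Prop :=
  f ∅ = 0 ∧ (∀ U V : Finset E, U ⊆ V → f U ≤ f V) ∧
    (∀ U V : Finset E, f (U ∪ V) + f (U ∩ V) ≤ f U + f V)

/-- The integral polymatroid base polytope `B_f(d)`. -/
def Base {E : Type*} [Fintype E] (f : Finset E → ℕ) (d : ℕ) : Set (E → ℕ) :=
  {x | (∀ U : Finset E, ∑ e ∈ U, x e ≤ f U) ∧ ∑ e, x e = d}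

/-- Regularity of a parametrized cost function: the left discrete derivative
`C⁻(x;t) = C(x;t) - C(x-1;t)` (for `x ≥ 1`) satisfies both
`C⁻(x;t) ≤ C⁻(x;t+1)` and `C⁻(x;t+1) ≤ C⁻(x+1;t)`. -/
def Regular (C : ℕ → ℕ → ℝ) : Prop :=
  ∀ x t : ℕ, 1 ≤ x →
    C x t - C (x - 1) t ≤ C x (t + 1) - C (x - 1) (t + 1) ∧
    C x (t + 1) - C (x - 1) (t + 1) ≤ C (x + 1) t - C x t

/-- The objective `Σ_{e ∈ E} C_e(x_e; t_e)` of problem `P(t,d)`. -/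
def totalCost {E : Type*} [Fintype E] (C : E → ℕ → ℕ → ℝ) (t : E → ℕ) (x : E → ℕ) : ℝ :=
  ∑ e, C e (x e) (t e)

/-- An optimal solution of `P(t,d)`: minimize `Σ_e C_e(x_e;t_e)` over `B_f(d)`. -/
def IsOptimal {E : Type*} [Fintype E] (f : Finset E → ℕ) (C : E → ℕ → ℕ → ℝ)
    (t : E → ℕ) (d : ℕ) (x : E → ℕ) : Prop :=
  x ∈ Base f d ∧ ∀ y ∈ Base f d, totalCost C t x ≤ totalCost C t y

/-- The `L1`-distance `‖u - v‖ = Σ_e |u_e - v_e|` of two vectors in `ℕ^E`. -/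
def l1 {E : Type*} [Fintype E] (u v : E → ℕ) : ℕ :=
  ∑ e, ((u e : ℤ) - (v e : ℤ)).natAbs

/-!
For submodular `f` the set `B_f(d)` is M-convex: if `y e < x e`, then some unit move can be made
simultaneously in `x` and, reversed, in `y`.  Indeed, after lowering `f ∅` to `0` and `f univ` to
`d`, the `x`-tight sets and the `y`-tight sets are sublattices; let `S` be the largest `x`-tight
set avoiding `e` and `T` the least `y`-tight set containing `e`.  Any `g ∈ T \ S` is admissible
for both moves, and submodularity forces `x g < y g` for some such `g`.

On an M-convex set, local optimality of `x` for a separable convex cost is global: moving any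
competitor `y` one exchange step towards `x` does not increase its cost, because by convexity the
change is bounded by that of the opposite exchange at `x`.
-/

section Lattice

variable {α : Type*} [Finite α]

lemma exists_isGreatest_of_supClosed [SemilatticeSup α] {s : Set α} (hs : SupClosed s)
    (hne : s.Nonempty) : ∃ a, IsGreatest s a := by
  obtain ⟨a, ha⟩ := s.toFinite.exists_maximal hne
  exact ⟨a, ha.prop, fun b hb => le_sup_right.trans
    (ha.le_of_ge (hs ha.prop hb) le_sup_left)⟩

lemma exists_isLeast_of_infClosed [SemilatticeInf α] {s : Set α} (hs : InfClosed s)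
    (hne : s.Nonempty) : ∃ a, IsLeast s a :=
  exists_isGreatest_of_supClosed (α := αᵒᵈ) hs hne

end Lattice

section Submodular

variable {α M : Type*} [Lattice α]

/-- Submodularity of a function on a lattice; on `Finset E` the join and meet are `∪` and `∩`. -/
def IsSubmodular [Add M] [LE M] (f : α → M) : Prop :=
  ∀ a b, f (a ⊔ b) + f (a ⊓ b) ≤ f a + f b

namespace IsSubmodular

variable [DecidableEq α] [AddCommMonoid M] [Preorder M] [IsOrderedAddMonoid M] {f : α → M} {m : M}

lemma update_bot [OrderBot α] (hf : IsSubmodular f) (hm : m ≤ f ⊥) :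
    IsSubmodular (Function.update f ⊥ m) := by
  intro a b
  rcases eq_or_ne a ⊥ with rfl | ha
  · rw [bot_sup_eq, bot_inf_eq, add_comm]
  rcases eq_or_ne b ⊥ with rfl | hb
  · rw [sup_bot_eq, inf_bot_eq]
  have hab : a ⊔ b ≠ ⊥ := fun h => ha (sup_eq_bot_iff.1 h).1
  have hle : Function.update f ⊥ m (a ⊓ b) ≤ f (a ⊓ b) :=
    update_le_self_iff.2 hm _
  rw [Function.update_of_ne hab, Function.update_of_ne ha, Function.update_of_ne hb]
  exact (by gcongr : _ ≤ f (a ⊔ b) + f (a ⊓ b)).trans (hf a b)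

lemma update_top [OrderTop α] (hf : IsSubmodular f) (hm : m ≤ f ⊤) :
    IsSubmodular (Function.update f ⊤ m) := by
  have hdual : IsSubmodular (α := αᵒᵈ) f := fun a b => (add_comm _ _).trans_le (hf a b)
  exact fun a b => (add_comm _ _).trans_le (hdual.update_bot hm a b)

end IsSubmodular

end Submodular

section Tight

variable {E : Type*} {f : Finset E → ℕ} {x y : E → ℕ} {U V : Finset E}

/-- The constraint `x(U) ≤ f(U)` holds with equality. -/
def IsTight (f : Finset E → ℕ) (x : E → ℕ) (U : Finset E) : Prop := ∑ i ∈ U, x i = f U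

variable [DecidableEq E]

lemma IsSubmodular.isSublattice_isTight (hf : IsSubmodular f)
    (hx : ∀ U, ∑ i ∈ U, x i ≤ f U) : IsSublattice {U | IsTight f x U} := by
  have uncross {U V : Finset E} (hU : IsTight f x U) (hV : IsTight f x V) :
      IsTight f x (U ∪ V) ∧ IsTight f x (U ∩ V) := by
    have hsub : f (U ∪ V) + f (U ∩ V) ≤ f U + f V := hf U V
    have hsum := sum_union_inter (s₁ := U) (s₂ := V) (f := x)
    have hunion := hx (U ∪ V)
    have hinter := hx (U ∩ V)
    unfold IsTight at *
    lia
  exact ⟨fun _ hU _ hV => (uncross hU hV).1, fun _ hU _ hV => (uncross hU hV).2⟩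

lemma IsSubmodular.sum_sdiff_le_of_isTight (hf : IsSubmodular f)
    (hx : ∀ U, ∑ i ∈ U, x i ≤ f U) (hy : ∀ U, ∑ i ∈ U, y i ≤ f U)
    (hU : IsTight f x U) (hV : IsTight f y V) : ∑ i ∈ V \ U, x i ≤ ∑ i ∈ V \ U, y i := by
  have hsub : f (U ∪ V) + f (U ∩ V) ≤ f U + f V := hf U V
  have hunion : ∑ i ∈ U ∪ V, x i = ∑ i ∈ U, x i + ∑ i ∈ V \ U, x i := by
    rw [← union_sdiff_self_eq_union, sum_union disjoint_sdiff]
  have hinter : ∑ i ∈ U ∩ V, y i + ∑ i ∈ V \ U, y i = ∑ i ∈ V, y i := by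
    rw [inter_comm, sum_inter_add_sum_sdiff]
  have hxle := hx (U ∪ V)
  have hyle := hy (U ∩ V)
  unfold IsTight at hU hV
  lia

end Tight

section UnitMove

variable {E : Type*} [DecidableEq E] {x : E → ℕ} {e g : E}

lemma sum_chi (e : E) (U : Finset E) : ∑ i ∈ U, chi e i = if e ∈ U then 1 else 0 := by
  simp [chi]

lemma chi_le_of_one_le (he : 1 ≤ x e) : chi e ≤ x := by
  intro i
  by_cases hi : i = e <;> simp [chi, hi, he]

lemma sum_add_chi_sub_chi (he : 1 ≤ x e) (g : E) (U : Finset E) :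
    ∑ i ∈ U, (x + chi g - chi e) i + (if e ∈ U then 1 else 0) =
      ∑ i ∈ U, x i + (if g ∈ U then 1 else 0) := by
  have hle : chi e ≤ x + chi g := (chi_le_of_one_le he).trans le_self_add
  rw [← sum_chi e, ← sum_chi g, ← sum_add_distrib, ← sum_add_distrib]
  exact sum_congr rfl fun i _ => congrFun (tsub_add_cancel_of_le hle) i

lemma add_chi_sub_chi_apply_left (hge : g ≠ e) : (x + chi g - chi e) g = x g + 1 := by
  simp [chi, hge]

lemma add_chi_sub_chi_apply_right (hge : g ≠ e) : (x + chi g - chi e) e = x e - 1 := by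
  simp [chi, hge.symm]

lemma add_chi_sub_chi_apply_of_ne {i : E} (hg : i ≠ g) (he : i ≠ e) :
    (x + chi g - chi e) i = x i := by
  simp [chi, hg, he]

variable [Fintype E]

lemma sum_comp_add_chi_sub_chi_sub {R : Type*} [AddCommGroup R] (c : E → ℕ → R) (x : E → ℕ)
    (hge : g ≠ e) :
    ∑ i, c i ((x + chi g - chi e) i) - ∑ i, c i (x i) =
      (c g (x g + 1) - c g (x g)) - (c e (x e) - c e (x e - 1)) := by
  rw [← sum_sub_distrib, Fintype.sum_eq_add g e hge fun i ⟨hg, he⟩ => by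
      rw [add_chi_sub_chi_apply_of_ne hg he, sub_self],
    add_chi_sub_chi_apply_left hge, add_chi_sub_chi_apply_right hge]
  abel

lemma l1_add_chi_sub_chi_lt {y : E → ℕ} (he : y e < x e) (hg : x g < y g) :
    l1 x (y + chi e - chi g) < l1 x y := by
  have heg : e ≠ g := by rintro rfl; exact lt_asymm he hg
  refine sum_lt_sum (fun i _ => ?_) ⟨e, mem_univ e, ?_⟩
  · rcases eq_or_ne i e with rfl | hie
    · rw [add_chi_sub_chi_apply_left heg]
      lia
    rcases eq_or_ne i g with rfl | hig
    · rw [add_chi_sub_chi_apply_right heg]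
      lia
    · rw [add_chi_sub_chi_apply_of_ne hie hig]
  · rw [add_chi_sub_chi_apply_left heg]
    lia

end UnitMove

section MConvex

variable {E : Type*} [DecidableEq E] {B : Set (E → ℕ)} {x y : E → ℕ}

/-- A possibly empty M-convex set in the sense of Murota, given by the simultaneous exchange
property. The truncated subtractions are exact, since `1 ≤ x e` and `1 ≤ y g`. -/
def IsMConvex (B : Set (E → ℕ)) : Prop :=
  ∀ ⦃x⦄, x ∈ B → ∀ ⦃y⦄, y ∈ B → ∀ ⦃e⦄, y e < x e →
    ∃ g, x g < y g ∧ x + chi g - chi e ∈ B ∧ y + chi e - chi g ∈ B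

lemma IsMConvex.eq_of_le (hB : IsMConvex B) (hx : x ∈ B) (hy : y ∈ B) (hxy : x ≤ y) : x = y := by
  refine hxy.antisymm fun e => ?_
  by_contra! he
  obtain ⟨g, hg, -, -⟩ := hB hy hx he
  exact hg.not_ge (hxy g)

variable [Fintype E] {R : Type*} [AddCommGroup R] [PartialOrder R] [IsOrderedAddMonoid R]
  {c : E → ℕ → R}

lemma sum_comp_add_chi_sub_chi_le (hc : ∀ e, Monotone (fwdDiff 1 (c e))) {e g : E}
    (he : y e < x e) (hg : x g < y g)
    (hx : c e (x e) - c e (x e - 1) ≤ c g (x g + 1) - c g (x g)) :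
    ∑ i, c i ((y + chi e - chi g) i) ≤ ∑ i, c i (y i) := by
  have heg : e ≠ g := by rintro rfl; exact lt_asymm he hg
  have slope_le (i : E) {a b : ℕ} (hab : a < b) :
      c i (a + 1) - c i a ≤ c i b - c i (b - 1) := by
    have hdiff : fwdDiff 1 (c i) a ≤ fwdDiff 1 (c i) (b - 1) := hc i (Nat.le_sub_one_of_lt hab)
    rwa [fwdDiff, fwdDiff, Nat.sub_add_cancel (Nat.one_le_of_lt hab)] at hdiff
  rw [← sub_nonpos, sum_comp_add_chi_sub_chi_sub c y heg, sub_nonpos]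
  calc c e (y e + 1) - c e (y e)
      ≤ c e (x e) - c e (x e - 1) := slope_le e he
    _ ≤ c g (x g + 1) - c g (x g) := hx
    _ ≤ c g (y g) - c g (y g - 1) := slope_le g hg

theorem IsMConvex.isMinOn_sum_iff (hB : IsMConvex B) (hc : ∀ e, Monotone (fwdDiff 1 (c e)))
    (hx : x ∈ B) :
    IsMinOn (fun y => ∑ e, c e (y e)) B x ↔
      ∀ e, 1 ≤ x e → ∀ g, g ≠ e → x + chi g - chi e ∈ B →
        c e (x e) - c e (x e - 1) ≤ c g (x g + 1) - c g (x g) := by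
  constructor
  · intro hmin e _ g hge hmem
    rw [← sub_nonneg, ← sum_comp_add_chi_sub_chi_sub c x hge, sub_nonneg]
    exact hmin hmem
  · intro hloc y hy
    change ∑ e, c e (x e) ≤ ∑ e, c e (y e)
    induction hn : l1 x y using Nat.strong_induction_on generalizing y with
    | _ n ih =>
      by_cases hxy : x ≤ y
      · rw [hB.eq_of_le hx hy hxy]
      obtain ⟨e, he⟩ : ∃ e, y e < x e := by simpa [Pi.le_def] using hxy
      obtain ⟨g, hg, hx', hy'⟩ := hB hx hy he
      have hge : g ≠ e := by rintro rfl; exact lt_asymm he hg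
      calc ∑ i, c i (x i)
          ≤ ∑ i, c i ((y + chi e - chi g) i) := ih _ (hn ▸ l1_add_chi_sub_chi_lt he hg) hy' rfl
        _ ≤ ∑ i, c i (y i) := sum_comp_add_chi_sub_chi_le hc he hg
            (hloc e (Nat.one_le_of_lt he) g hge hx')

end MConvex

section Base

variable {E : Type*} [Fintype E] [DecidableEq E] {f : Finset E → ℕ} {d : ℕ} {x y : E → ℕ} {e g : E}

lemma add_chi_sub_chi_mem_base (hx : x ∈ Base f d) (he : 1 ≤ x e)
    (htight : ∀ U, IsTight f x U → g ∈ U → e ∈ U) : x + chi g - chi e ∈ Base f d := by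
  refine ⟨fun U => ?_, ?_⟩
  · have hsum := sum_add_chi_sub_chi he g U
    have hle := hx.1 U
    by_cases hg : g ∈ U
    · by_cases hU : IsTight f x U
      · simp only [hg, htight U hU hg, if_true] at hsum
        lia
      · have hlt : ∑ i ∈ U, x i < f U := lt_of_le_of_ne hle hU
        simp only [hg, if_true] at hsum
        lia
    · simp only [hg, if_false] at hsum
      lia
  · have hsum := sum_add_chi_sub_chi he g univ
    simp only [mem_univ, if_true, add_left_inj] at hsum
    exact hsum.trans hx.2

lemma IsSubmodular.isMConvex_base_of_empty_of_univ (hf : IsSubmodular f) (hbot : f ∅ = 0)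
    (htop : f univ = d) : IsMConvex (Base f d) := by
  intro x hx y hy e he
  have hxlat := hf.isSublattice_isTight hx.1
  have hylat := hf.isSublattice_isTight hy.1
  obtain ⟨S, ⟨hS, heS⟩, hSmax⟩ : ∃ S, IsGreatest {U | IsTight f x U ∧ e ∉ U} S :=
    exists_isGreatest_of_supClosed
      (fun U hU V hV => ⟨hxlat.supClosed hU.1 hV.1, notMem_union.2 ⟨hU.2, hV.2⟩⟩)
      ⟨∅, by simp [IsTight, hbot], notMem_empty e⟩
  obtain ⟨T, ⟨hT, heT⟩, hTmin⟩ : ∃ T, IsLeast {U | IsTight f y U ∧ e ∈ U} T :=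
    exists_isLeast_of_infClosed
      (fun U hU V hV => ⟨hylat.infClosed hU.1 hV.1, mem_inter.2 ⟨hU.2, hV.2⟩⟩)
      ⟨univ, hy.2.trans htop.symm, mem_univ e⟩
  obtain ⟨g, hg, hlt⟩ : ∃ g ∈ T \ S, x g < y g := by
    by_contra! hle
    exact (sum_lt_sum hle ⟨e, mem_sdiff.2 ⟨heT, heS⟩, he⟩).not_ge
      (hf.sum_sdiff_le_of_isTight hx.1 hy.1 hS hT)
  obtain ⟨hgT, hgS⟩ := mem_sdiff.1 hg
  refine ⟨g, hlt, ?_, ?_⟩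
  · exact add_chi_sub_chi_mem_base hx (Nat.one_le_of_lt he) fun U hU hgU => by
      by_contra heU
      exact hgS (hSmax ⟨hU, heU⟩ hgU)
  · exact add_chi_sub_chi_mem_base hy (Nat.one_le_of_lt hlt) fun U hU heU => hTmin ⟨hU, heU⟩ hgT

lemma base_update_empty (f : Finset E → ℕ) (d : ℕ) :
    Base (Function.update f ∅ 0) d = Base f d := by
  ext x
  refine and_congr_left fun _ => forall_congr' fun U => ?_
  rcases eq_or_ne U ∅ with rfl | hU
  · simp
  · rw [Function.update_of_ne hU]

lemma base_update_univ (hd : d ≤ f univ) : Base (Function.update f univ d) d = Base f d := by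
  ext x
  refine and_congr_left fun hsum => forall_congr' fun U => ?_
  rcases eq_or_ne U univ with rfl | hU
  · simp [hsum, hd]
  · rw [Function.update_of_ne hU]

theorem IsSubmodular.isMConvex_base (hf : IsSubmodular f) (d : ℕ) : IsMConvex (Base f d) := by
  intro x hx y hy e he
  have : Nonempty E := ⟨e⟩
  have hne : (∅ : Finset E) ≠ univ := univ_nonempty.ne_empty.symm
  have hd : d ≤ f univ := hx.2 ▸ hx.1 univ
  have hd' : d ≤ Function.update f ∅ 0 univ := by rwa [Function.update_of_ne hne.symm]
  rw [← base_update_empty, ← base_update_univ hd'] at hx hy ⊢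
  exact ((hf.update_bot (Nat.zero_le _)).update_top hd').isMConvex_base_of_empty_of_univ
    (by simp [Function.update_of_ne hne]) (Function.update_self ..) hx hy he

end Base

theorem fujishige_optimality_general {E R : Type*} [Fintype E] [DecidableEq E]
    [AddCommGroup R] [PartialOrder R] [IsOrderedAddMonoid R]
    {f : Finset E → ℕ} (hf : IsSubmodular f) {c : E → ℕ → R}
    (hc : ∀ e, Monotone (fwdDiff 1 (c e))) {d : ℕ} {x : E → ℕ} (hx : x ∈ Base f d) :
    IsMinOn (fun y => ∑ e, c e (y e)) (Base f d) x ↔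
      ∀ e, 1 ≤ x e → ∀ g, g ≠ e → x + chi g - chi e ∈ Base f d →
        c e (x e) - c e (x e - 1) ≤ c g (x g + 1) - c g (x g) :=
  (hf.isMConvex_base d).isMinOn_sum_iff hc hx

/-- **Fujishige's optimality criterion.** For an integral polymatroid rank function `f`,
nonnegative cost functions `C_e` that are discrete convex in the first argument,
`t ∈ ℕ^E` and `d ∈ ℕ`, a point `x* ∈ B_f(d)` minimizes `Σ_e C_e(x_e;t_e)` over `B_f(d)`
iff for every `e` with `x*_e ≥ 1` and every `g ≠ e` with `x* + χ_g - χ_e ∈ B_f(d)` one has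
`C_e⁻(x*_e;t_e) ≤ C_g⁺(x*_g;t_g)`. -/
theorem fujishige_optimality {E : Type*} [Fintype E] [DecidableEq E] [Nonempty E]
    (f : Finset E → ℕ) (hf : IsPolymatroidRank f)
    (C : E → ℕ → ℕ → ℝ) (hC0 : ∀ e x t, 0 ≤ C e x t)
    (hconv : ∀ e x t, 1 ≤ x → C e x t - C e (x - 1) t ≤ C e (x + 1) t - C e x t)
    (t : E → ℕ) (d : ℕ) (xs : E → ℕ) (hxs : xs ∈ Base f d) :
    IsOptimal f C t d xs ↔
      (∀ e, 1 ≤ xs e → ∀ g, g ≠ e → xs + chi g - chi e ∈ Base f d →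
        C e (xs e) (t e) - C e (xs e - 1) (t e) ≤
          C g (xs g + 1) (t g) - C g (xs g) (t g)) :=
  (and_iff_right hxs).trans <| fujishige_optimality_general hf.2.2 (c := fun e n => C e n (t e))
    (fun e => monotone_nat_of_le_succ fun n => hconv e (n + 1) (t e) n.succ_pos) hxs
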